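/- Under Assumptions A1 and A2, let s ≥ 1 be an integer. Then for every k ∈ {1,…,s}, all integers 0 ≤ t_1 ≤ ⋯ ≤ t_k ≤ n−1, all integers p_1,…,p_k ≥ 1 with p_1+⋯+p_k ≤ s, and all functions h_ℓ ∈ L_{V^{p_ℓ/s}} (ℓ = 1,…,k), the centered moment under the stationary chain satisfies |Ē_π[h_1(X_{t_1}),…,h_k(X_{t_k})]| ≤ 2^{k−1}·(cπ(V))^{Σ_{ℓ=1}^k Σ_{j=ℓ}^k p_j/s}·ρ^{Σ_{j=2}^k (t_j−t_{j−1})·p_j/s}·Π_{ℓ=1}^k ‖h_ℓ‖_{V^{p_ℓ/s}}. -/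

import Mathlib

open MeasureTheory ProbabilityTheory Finset
open scoped ENNReal Classical

noncomputable section

/-- `n`-th iterate of a Markov kernel. -/
def kIter {Y : Type*} [MeasurableSpace Y] (Q : ProbabilityTheory.Kernel Y Y) :
    ℕ → ProbabilityTheory.Kernel Y Y
  | 0 => ProbabilityTheory.Kernel.id
  | n + 1 => (kIter Q n).comp Q

/-- `U`-weighted total variation distance between two finite measures:
`∫ U d|μ - ν|`, via the Jordan decomposition of `μ - ν`. -/
def wTV {Y : Type*} [MeasurableSpace Y] (U : Y → ℝ) (μ ν : Measure Y) : ℝ :=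
  (∫ x, U x ∂(μ - ν)) + ∫ x, U x ∂(ν - μ)

/-- `U`-weighted sup norm `‖g‖_U = sup_x |g x| / U x`. -/
def vnorm {Y : Type*} (U : Y → ℝ) (g : Y → ℝ) : ℝ := ⨆ x, |g x| / U x

/-- Membership in the class `L_U`: measurable with finite `U`-weighted sup norm. -/
structure MemL {Y : Type*} [MeasurableSpace Y] (U : Y → ℝ) (g : Y → ℝ) : Prop where
  meas : Measurable g
  bdd : BddAbove (Set.range fun x => |g x| / U x)

/-- `(Xs n)` is a Markov chain with initial distribution `ξ` and Markov kernel `Q`: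
the law of `Xs 0` is `ξ` and, conditionally on the past up to time `n`, the
distribution of `Xs (n+1)` is `Q (Xs n)`. -/
structure IsMarkovChain {X : Type*} [MeasurableSpace X] {Ω : Type*} [MeasurableSpace Ω]
    (P : Measure Ω) (Xs : ℕ → Ω → X) (ξ : Measure X)
    (Q : ProbabilityTheory.Kernel X X) : Prop where
  meas : ∀ n, Measurable (Xs n)
  init : P.map (Xs 0) = ξ
  markov : ∀ (n : ℕ) (f : X → ℝ), Measurable f → (∀ x, |f x| ≤ 1) →
    (P[fun ω => f (Xs (n + 1) ω) |
        ⨆ i ∈ Finset.range (n + 1), MeasurableSpace.comap (Xs i) inferInstance])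
      =ᵐ[P] fun ω => ∫ y, f y ∂(Q (Xs n ω))

/-- The combinatorial coefficient `B_γ(u,q)`. -/
def Bcoef (γ : ℝ) (u q : ℕ) : ℝ :=
  ((2 * q).factorial : ℝ) / (u.factorial : ℝ) *
    ∑ k ∈ Finset.univ.filter
        (fun k : Fin u → Fin (2 * q + 1) =>
          (∀ i, 2 ≤ (k i : ℕ)) ∧ ∑ i, (k i : ℕ) = 2 * q),
      ∏ i, ((k i : ℕ).factorial : ℝ) ^ (γ + 2)

/-- The `2q`-th moment `(2q)!/(q! 2^q)` of the standard Gaussian. -/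
def gaussMoment (q : ℕ) : ℝ := ((2 * q).factorial : ℝ) / ((q.factorial : ℝ) * 2 ^ q)

/-- The auxiliary sequence `Z_ℓ` in the definition of centered moments:
`Z_{k+1} = 1`, `Z_ℓ = W_ℓ Z_{ℓ+1} - E[W_ℓ Z_{ℓ+1}]`. -/
def Zseq {Ω : Type*} [MeasurableSpace Ω] (P : Measure Ω) : List (Ω → ℝ) → Ω → ℝ
  | [] => fun _ => 1
  | W :: rest => fun ω => W ω * Zseq P rest ω - ∫ ω', W ω' * Zseq P rest ω' ∂P

/-- The centered moment `Ē[W_1, …, W_k] = E[W_1 Z_2]`. -/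
def cmom {Ω : Type*} [MeasurableSpace Ω] (P : Measure Ω) : List (Ω → ℝ) → ℝ
  | [] => 0
  | W :: rest => ∫ ω, W ω * Zseq P rest ω ∂P

/-!
Condition `Z_ℓ` on the past up to time `t_{ℓ-1}`. By the Markov property the result is a function
`f` of `X_{t_{ℓ-1}}` alone: if `g` plays this role for `Z_{ℓ+1}`, then `f` is
`(Q ^ (t_ℓ - t_{ℓ-1}) - π) (h_ℓ g)`. Hölder's inequality makes everything integrable, since
`V ^ a ∈ L^{1/a}(π)` and the exponents sum to at most one.

Each application of `Q ^ n - π` is bounded by ergodicity. The total variation mass of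
`Q ^ n x - π` is at most `2` and its `V`-weighted mass at most `2 * (c * π(V) * ρ ^ n * V x)`, so
by concavity of `v ↦ v ^ a` its `V ^ a`-weighted mass is at most
`2 * (c * π(V) * ρ ^ n * V x) ^ a`. Here `a` is the sum of the exponents from `h_ℓ` on, whence the
double sum in the power of `c * π(V)`.
-/

section WeightedNorm

variable {X : Type*} {U g : X → ℝ}

lemma vnorm_nonneg (hU : ∀ x, 0 ≤ U x) : 0 ≤ vnorm U g :=
  Real.iSup_nonneg fun x => div_nonneg (abs_nonneg _) (hU x)

lemma MemL.abs_le_vnorm_mul [MeasurableSpace X] (hg : MemL U g) (hU : ∀ x, 0 < U x) (x : X) :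
    |g x| ≤ vnorm U g * U x := by
  rw [← div_le_iff₀ (hU x)]
  exact le_ciSup hg.bdd x

lemma MemL.ae_abs_mul_le [MeasurableSpace X] {μ : Measure X} {V f : X → ℝ} {a b B : ℝ}
    (hg : MemL (fun x => V x ^ a) g) (hV0 : ∀ x, 0 < V x)
    (hf : ∀ᵐ x ∂μ, |f x| ≤ B * V x ^ b) :
    ∀ᵐ x ∂μ, |g x * f x| ≤ vnorm (fun x => V x ^ a) g * B * V x ^ (a + b) := by
  filter_upwards [hf] with x hfx
  have hgx := hg.abs_le_vnorm_mul (fun x => Real.rpow_pos_of_pos (hV0 x) a) x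
  calc |g x * f x| = |g x| * |f x| := abs_mul _ _
    _ ≤ vnorm (fun x => V x ^ a) g * V x ^ a * (B * V x ^ b) :=
        mul_le_mul hgx hfx (abs_nonneg _) ((abs_nonneg _).trans hgx)
    _ = vnorm (fun x => V x ^ a) g * B * V x ^ (a + b) := by
        rw [Real.rpow_add (hV0 x)]
        ring

end WeightedNorm

section RpowIntegral

variable {X : Type*} [MeasurableSpace X] {μ : Measure X} {V : X → ℝ} {a : ℝ}

lemma memLp_rpow_inv (hV0 : ∀ x, 0 ≤ V x) (hV : Integrable V μ) (ha : 0 ≤ a) :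
    MemLp (fun x => V x ^ a) (ENNReal.ofReal a)⁻¹ μ := by
  have h := (memLp_one_iff_integrable.mpr hV).norm_rpow_div (ENNReal.ofReal a)
  simpa only [ENNReal.toReal_ofReal ha, one_div, Real.norm_of_nonneg (hV0 _)] using h

lemma MemL.memLp_rpow_inv {g : X → ℝ} (hg : MemL (fun x => V x ^ a) g) (hV0 : ∀ x, 0 < V x)
    (hV : Integrable V μ) (ha : 0 ≤ a) : MemLp g (ENNReal.ofReal a)⁻¹ μ := by
  have hU : ∀ x, 0 < V x ^ a := fun x => Real.rpow_pos_of_pos (hV0 x) a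
  refine (_root_.memLp_rpow_inv (fun x => (hV0 x).le) hV ha).of_le_mul
    (c := vnorm (fun x => V x ^ a) g) hg.meas.aestronglyMeasurable (ae_of_all _ fun x => ?_)
  simpa only [Real.norm_eq_abs, abs_of_pos (hU x)] using hg.abs_le_vnorm_mul hU x

lemma integrable_rpow [IsFiniteMeasure μ] (hV0 : ∀ x, 0 ≤ V x) (hV : Integrable V μ) (ha0 : 0 ≤ a)
    (ha1 : a ≤ 1) : Integrable (fun x => V x ^ a) μ :=
  (memLp_rpow_inv hV0 hV ha0).integrable <|
    ENNReal.one_le_inv.mpr <| ENNReal.ofReal_le_one.mpr ha1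

lemma rpow_le_rpow_mul_tangent {v w : ℝ} (hv : 0 ≤ v) (hw : 0 < w) (ha0 : 0 ≤ a) (ha1 : a ≤ 1) :
    v ^ a ≤ w ^ a * (a * (v / w) + (1 - a)) := by
  have h := Real.geom_mean_le_arith_mean2_weighted ha0 (sub_nonneg.2 ha1)
    (div_nonneg hv hw.le) zero_le_one (by ring)
  rwa [Real.one_rpow, mul_one, mul_one, Real.div_rpow hv hw.le,
    div_le_iff₀' (Real.rpow_pos_of_pos hw a)] at h

lemma integral_rpow_le_mul_rpow [IsFiniteMeasure μ] (hV0 : ∀ x, 0 ≤ V x) (hV : Integrable V μ)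
    (ha0 : 0 ≤ a) (ha1 : a ≤ 1) {w T : ℝ} (hw : 0 < w) (hT : μ.real Set.univ ≤ T)
    (hVw : ∫ x, V x ∂μ ≤ T * w) : ∫ x, V x ^ a ∂μ ≤ T * w ^ a := by
  have hVw' : (∫ x, V x ∂μ) / w ≤ T := (div_le_iff₀ hw).mpr hVw
  have hlin : Integrable (fun x => a * (V x / w)) μ := (hV.div_const w).const_mul a
  calc ∫ x, V x ^ a ∂μ ≤ ∫ x, w ^ a * (a * (V x / w) + (1 - a)) ∂μ :=
        integral_mono (integrable_rpow hV0 hV ha0 ha1)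
          ((hlin.add (integrable_const _)).const_mul _)
          fun x => rpow_le_rpow_mul_tangent (hV0 x) hw ha0 ha1
    _ = w ^ a * (a * ((∫ x, V x ∂μ) / w) + μ.real Set.univ * (1 - a)) := by
        rw [integral_const_mul, integral_add hlin (integrable_const _), integral_const_mul,
          integral_div, integral_const, smul_eq_mul]
    _ ≤ w ^ a * (a * T + T * (1 - a)) := by gcongr
    _ = T * w ^ a := by ring

end RpowIntegral

section WeightedTotalVariation

variable {X : Type*} [MeasurableSpace X] {μ ν : Measure X}

lemma measure_add_sub_comm [IsFiniteMeasure μ] [IsFiniteMeasure ν] :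
    μ + (ν - μ) = ν + (μ - ν) := by
  have h := Measure.sub_toSignedMeasure_eq_toSignedMeasure_sub (μ := μ) (ν := ν)
  rw [sub_eq_sub_iff_add_eq_add] at h
  rw [← Measure.toSignedMeasure_eq_toSignedMeasure_iff, Measure.toSignedMeasure_add,
    Measure.toSignedMeasure_add, h, add_comm]

lemma integral_sub_integral_eq_integral_sub_measure [IsFiniteMeasure μ] [IsFiniteMeasure ν]
    {g : X → ℝ} (hμ : Integrable g μ) (hν : Integrable g ν) :
    ∫ x, g x ∂μ - ∫ x, g x ∂ν = ∫ x, g x ∂(μ - ν) - ∫ x, g x ∂(ν - μ) := by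
  have h := congrArg (fun η => ∫ x, g x ∂η) (measure_add_sub_comm (μ := μ) (ν := ν))
  rw [integral_add_measure hμ (hν.mono_measure Measure.sub_le),
    integral_add_measure hν (hμ.mono_measure Measure.sub_le)] at h
  linarith

lemma abs_integral_sub_integral_le_mul_wTV [IsFiniteMeasure μ] [IsFiniteMeasure ν] {U g : X → ℝ}
    {C : ℝ} (hUμ : Integrable U μ) (hUν : Integrable U ν) (hg : Measurable g)
    (hgμ : ∀ᵐ x ∂μ, |g x| ≤ C * U x) (hgν : ∀ᵐ x ∂ν, |g x| ≤ C * U x) :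
    |∫ x, g x ∂μ - ∫ x, g x ∂ν| ≤ C * wTV U μ ν := by
  have integrable_of {η : Measure X} (hU : Integrable U η) (hgη : ∀ᵐ x ∂η, |g x| ≤ C * U x) :
      Integrable g η := (hU.const_mul C).mono' hg.aestronglyMeasurable hgη
  have abs_le {η η' : Measure X} (hU : Integrable U η) (hgη : ∀ᵐ x ∂η, |g x| ≤ C * U x) :
      |∫ x, g x ∂(η - η')| ≤ C * ∫ x, U x ∂(η - η') := by
    rw [← integral_const_mul, ← Real.norm_eq_abs]
    exact norm_integral_le_of_norm_le ((hU.mono_measure Measure.sub_le).const_mul C)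
      (hgη.filter_mono (ae_mono Measure.sub_le))
  rw [integral_sub_integral_eq_integral_sub_measure (integrable_of hUμ hgμ)
    (integrable_of hUν hgν), wTV, mul_add]
  exact (abs_sub _ _).trans (add_le_add (abs_le hUμ hgμ) (abs_le hUν hgν))

lemma wTV_rpow_le [IsProbabilityMeasure μ] [IsProbabilityMeasure ν] {V : X → ℝ} {a w : ℝ}
    (hV0 : ∀ x, 0 ≤ V x) (hVμ : Integrable V μ) (hVν : Integrable V ν) (ha0 : 0 ≤ a) (ha1 : a ≤ 1)
    (hw : 0 < w) (hVw : wTV V μ ν ≤ 2 * w) : wTV (fun x => V x ^ a) μ ν ≤ 2 * w ^ a := by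
  have integral_sub_add_sub {f : X → ℝ} (hμ : Integrable f μ) (hν : Integrable f ν) :
      ∫ x, f x ∂((μ - ν) + (ν - μ)) = wTV f μ ν :=
    integral_add_measure (hμ.mono_measure Measure.sub_le) (hν.mono_measure Measure.sub_le)
  have real_sub_le (η η' : Measure X) [IsProbabilityMeasure η] :
      (η - η').real Set.univ ≤ 1 := by
    rw [← probReal_univ (μ := η)]
    exact ENNReal.toReal_mono (measure_ne_top _ _) (Measure.sub_le _)
  have hmass : ((μ - ν) + (ν - μ)).real Set.univ ≤ 2 := by
    rw [measureReal_add_apply]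
    linarith [real_sub_le μ ν, real_sub_le ν μ]
  rw [← integral_sub_add_sub hVμ hVν] at hVw
  rw [← integral_sub_add_sub (integrable_rpow hV0 hVμ ha0 ha1) (integrable_rpow hV0 hVν ha0 ha1)]
  exact integral_rpow_le_mul_rpow hV0
    ((hVμ.mono_measure Measure.sub_le).add_measure (hVν.mono_measure Measure.sub_le))
    ha0 ha1 hw hmass hVw

end WeightedTotalVariation

section KernelIterates

variable {X : Type*} [MeasurableSpace X] {Q : Kernel X X}

instance isMarkovKernel_kIter [IsMarkovKernel Q] (n : ℕ) : IsMarkovKernel (kIter Q n) := by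
  induction n with
  | zero => exact inferInstanceAs (IsMarkovKernel Kernel.id)
  | succ n ih => exact inferInstanceAs (IsMarkovKernel ((kIter Q n).comp Q))

lemma bind_kIter_succ (μ : Measure X) (n : ℕ) :
    μ.bind (kIter Q (n + 1)) = (μ.bind Q).bind (kIter Q n) :=
  Measure.comp_assoc.symm

lemma invariant_kIter {π : Measure X} (hπ : Q.Invariant π) (n : ℕ) : (kIter Q n).Invariant π := by
  induction n with
  | zero => exact Measure.id_comp
  | succ n ih => exact ih.comp hπ

lemma integral_measure_bind {κ : Kernel X X} {μ : Measure X} {g : X → ℝ}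
    (hg : Integrable g (μ.bind κ)) : ∫ x, g x ∂(μ.bind κ) = ∫ x, ∫ y, g y ∂(κ x) ∂μ := by
  rw [Measure.comp_eq_comp_const_apply] at hg ⊢
  rw [Kernel.integral_comp hg, Kernel.const_apply]

lemma integrable_integral_of_integrable_bind {κ : Kernel X X} {μ : Measure X} {g : X → ℝ}
    (hg : Integrable g (μ.bind κ)) : Integrable (fun x => ∫ y, g y ∂(κ x)) μ := by
  rw [Measure.comp_eq_comp_const_apply] at hg
  simpa only [Kernel.const_apply] using hg.integral_comp

end KernelIterates

section GeometricErgodicity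

variable {X : Type*} [MeasurableSpace X]

/-- `V`-geometric ergodicity of `Q` towards `π` with constant `c` and rate `ρ`, required only for
the chain started at a point; it is the ergodicity hypothesis of the paper at Dirac masses. -/
def GeometricallyErgodic (Q : Kernel X X) (π : Measure X) (V : X → ℝ) (c ρ : ℝ) : Prop :=
  ∀ (x : X) (n : ℕ), wTV V (kIter Q n x) π ≤ c * (V x + ∫ y, V y ∂π) * ρ ^ n

variable {Q : Kernel X X} {π : Measure X} {V : X → ℝ} {c ρ : ℝ}

lemma geometricallyErgodic_of_forall_measure (hV : Measurable V)
    (herg : ∀ ξ : Measure X, IsProbabilityMeasure ξ → Integrable V ξ → ∀ n : ℕ,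
      wTV V (ξ.bind (kIter Q n)) π ≤ c * ((∫ x, V x ∂ξ) + ∫ x, V x ∂π) * ρ ^ n) :
    GeometricallyErgodic Q π V c ρ := fun x n => by
  have h := herg (Measure.dirac x) inferInstance
    (integrable_dirac' hV.stronglyMeasurable enorm_lt_top) n
  rwa [Measure.dirac_bind (kIter Q n).measurable, integral_dirac' _ _ hV.stronglyMeasurable] at h

variable [IsProbabilityMeasure π]

lemma one_le_integral_of_one_le (hV1 : ∀ x, 1 ≤ V x) (hVπ : Integrable V π) :
    1 ≤ ∫ x, V x ∂π := by
  simpa using integral_mono (integrable_const (μ := π) (1 : ℝ)) hVπ hV1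

lemma GeometricallyErgodic.wTV_le_two_mul (hQ : GeometricallyErgodic Q π V c ρ)
    (hV1 : ∀ x, 1 ≤ V x) (hVπ : Integrable V π) (hc : 0 ≤ c) (hρ : 0 ≤ ρ) (x : X) (n : ℕ) :
    wTV V (kIter Q n x) π ≤ 2 * ((c * ∫ y, V y ∂π) * ρ ^ n * V x) := by
  have hadd : V x + ∫ y, V y ∂π ≤ 2 * (V x * ∫ y, V y ∂π) := by
    nlinarith [hV1 x, one_le_integral_of_one_le hV1 hVπ]
  calc wTV V (kIter Q n x) π ≤ c * (V x + ∫ y, V y ∂π) * ρ ^ n := hQ x n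
    _ ≤ c * (2 * (V x * ∫ y, V y ∂π)) * ρ ^ n := by gcongr
    _ = 2 * ((c * ∫ y, V y ∂π) * ρ ^ n * V x) := by ring

lemma GeometricallyErgodic.ae_abs_integral_sub_le [IsMarkovKernel Q]
    (hQ : GeometricallyErgodic Q π V c ρ) (hπ : Q.Invariant π) (hV1 : ∀ x, 1 ≤ V x)
    (hVπ : Integrable V π) (hc : 0 < c) (hρ : 0 < ρ)
    {a C : ℝ} (ha0 : 0 ≤ a) (ha1 : a ≤ 1) (hC : 0 ≤ C) {g : X → ℝ} (hg : Measurable g)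
    (hgV : ∀ᵐ x ∂π, |g x| ≤ C * V x ^ a) (n : ℕ) :
    ∀ᵐ x ∂π, |∫ y, g y ∂(kIter Q n x) - ∫ y, g y ∂π| ≤
      2 * C * ((c * ∫ y, V y ∂π) * ρ ^ n) ^ a * V x ^ a := by
  have hV0 : ∀ x, 0 ≤ V x := fun x => zero_le_one.trans (hV1 x)
  have hK : 0 < (c * ∫ y, V y ∂π) * ρ ^ n := by
    have := one_le_integral_of_one_le hV1 hVπ
    positivity
  have hπn := (invariant_kIter hπ n).def
  have hVQ : ∀ᵐ x ∂π, Integrable V (kIter Q n x) :=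
    Measure.ae_integrable_of_integrable_comp (hπn.symm ▸ hVπ)
  have hgQ : ∀ᵐ x ∂π, ∀ᵐ y ∂(kIter Q n x), |g y| ≤ C * V y ^ a :=
    Measure.ae_ae_of_ae_comp (hπn.symm ▸ hgV)
  filter_upwards [hVQ, hgQ] with x hVx hgx
  calc |∫ y, g y ∂(kIter Q n x) - ∫ y, g y ∂π| ≤ C * wTV (fun y => V y ^ a) (kIter Q n x) π :=
        abs_integral_sub_integral_le_mul_wTV (integrable_rpow hV0 hVx ha0 ha1)
          (integrable_rpow hV0 hVπ ha0 ha1) hg hgx hgV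
    _ ≤ C * (2 * ((c * ∫ y, V y ∂π) * ρ ^ n * V x) ^ a) := by
        gcongr
        exact wTV_rpow_le hV0 hVx hVπ ha0 ha1 (mul_pos hK (zero_lt_one.trans_le (hV1 x)))
          (hQ.wTV_le_two_mul hV1 hVπ hc.le hρ.le x n)
    _ = 2 * C * ((c * ∫ y, V y ∂π) * ρ ^ n) ^ a * V x ^ a := by
        rw [Real.mul_rpow hK.le (hV0 x)]
        ring

end GeometricErgodicity

section MarkovProperty

variable {X Ω : Type*} [MeasurableSpace X] [mΩ : MeasurableSpace Ω] {P : Measure Ω}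
  {Xs : ℕ → Ω → X} {ξ : Measure X} {Q : Kernel X X}

/-- The natural filtration of a Markov chain. `Filtration.natural` would ask for a topology on the
state space. -/
def IsMarkovChain.filtration (hX : IsMarkovChain P Xs ξ Q) : Filtration ℕ mΩ where
  seq n := ⨆ i ∈ Finset.range (n + 1), MeasurableSpace.comap (Xs i) inferInstance
  mono' _ _ hmn := biSup_mono fun _ hi => Finset.range_subset_range.2 (Nat.succ_le_succ hmn) hi
  le' _ := iSup₂_le fun i _ => (hX.meas i).comap_le

lemma IsMarkovChain.measurable_filtration (hX : IsMarkovChain P Xs ξ Q) (n : ℕ) :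
    Measurable[hX.filtration n] (Xs n) :=
  Measurable.of_comap_le (le_iSup₂_of_le n (Finset.self_mem_range_succ n) le_rfl)

variable [IsFiniteMeasure P] [IsMarkovKernel Q]

lemma IsMarkovChain.map_restrict_succ (hX : IsMarkovChain P Xs ξ Q) {n : ℕ} {A : Set Ω}
    (hA : MeasurableSet[hX.filtration n] A) :
    (P.restrict A).map (Xs (n + 1)) = ((P.restrict A).map (Xs n)).bind Q := by
  ext B hB
  have hind : Measurable (B.indicator (1 : X → ℝ)) := measurable_one.indicator hB
  have hone (x : X) : |B.indicator (1 : X → ℝ) x| ≤ 1 := by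
    by_cases hx : x ∈ B <;> simp [hx]
  have hint : Integrable (fun ω => B.indicator (1 : X → ℝ) (Xs (n + 1) ω)) P :=
    (integrable_const (1 : ℝ)).mono' (hind.comp (hX.meas _)).aestronglyMeasurable
      (ae_of_all _ fun ω => hone _)
  have hbind : Integrable (B.indicator (1 : X → ℝ)) (((P.restrict A).map (Xs n)).bind Q) :=
    (integrable_const (1 : ℝ)).mono' hind.aestronglyMeasurable (ae_of_all _ hone)
  refine (measureReal_eq_measureReal_iff).1 ?_
  calc ((P.restrict A).map (Xs (n + 1))).real B
      = ∫ ω in A, B.indicator 1 (Xs (n + 1) ω) ∂P := by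
        rw [← integral_indicator_one hB,
          integral_map (hX.meas _).aemeasurable hind.aestronglyMeasurable]
    _ = ∫ ω in A, ∫ y, B.indicator 1 y ∂(Q (Xs n ω)) ∂P := by
        rw [← setIntegral_condExp (hX.filtration.le n) hint hA]
        exact integral_congr_ae (ae_restrict_of_ae (hX.markov n _ hind hone))
    _ = ∫ x, ∫ y, B.indicator 1 y ∂(Q x) ∂((P.restrict A).map (Xs n)) :=
        (integral_map (hX.meas n).aemeasurable
          hind.stronglyMeasurable.integral_kernel.aestronglyMeasurable).symm
    _ = (((P.restrict A).map (Xs n)).bind Q).real B := by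
        rw [← integral_measure_bind hbind, integral_indicator_one hB]

lemma IsMarkovChain.map_restrict_add (hX : IsMarkovChain P Xs ξ Q) {n : ℕ} {A : Set Ω}
    (hA : MeasurableSet[hX.filtration n] A) (j : ℕ) :
    (P.restrict A).map (Xs (n + j)) = ((P.restrict A).map (Xs n)).bind (kIter Q j) := by
  induction j generalizing n with
  | zero => exact Measure.id_comp.symm
  | succ j ih =>
    rw [bind_kIter_succ, ← hX.map_restrict_succ hA, ← ih (hX.filtration.mono n.le_succ _ hA),
      Nat.succ_add_eq_add_succ]

lemma IsMarkovChain.condExp_comp_of_le (hX : IsMarkovChain P Xs ξ Q) {m n : ℕ} (hmn : m ≤ n)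
    {g : X → ℝ} (hg : Measurable g) (hgX : Integrable (fun ω => g (Xs n ω)) P) :
    P[fun ω => g (Xs n ω) | hX.filtration m] =ᵐ[P]
      fun ω => ∫ y, g y ∂(kIter Q (n - m) (Xs m ω)) := by
  have hmeas : StronglyMeasurable fun x => ∫ y, g y ∂(kIter Q (n - m) x) :=
    hg.stronglyMeasurable.integral_kernel
  have hmap {A : Set Ω} (hA : MeasurableSet[hX.filtration m] A) :
      (P.restrict A).map (Xs n) = ((P.restrict A).map (Xs m)).bind (kIter Q (n - m)) := by
    rw [← hX.map_restrict_add hA, Nat.add_sub_cancel' hmn]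
  have hbind {A : Set Ω} (hA : MeasurableSet[hX.filtration m] A) :
      Integrable g (((P.restrict A).map (Xs m)).bind (kIter Q (n - m))) := by
    rw [← hmap hA, integrable_map_measure hg.aestronglyMeasurable (hX.meas n).aemeasurable]
    exact hgX.integrableOn
  refine (ae_eq_condExp_of_forall_setIntegral_eq (hX.filtration.le m) hgX
    (fun A hA _ => ?_) (fun A hA _ => ?_) ?_).symm
  · exact (integrable_integral_of_integrable_bind (hbind hA)).comp_measurable (hX.meas m)
  · rw [← integral_map (hX.meas m).aemeasurable hmeas.aestronglyMeasurable,
      ← integral_measure_bind (hbind hA), ← hmap hA,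
      integral_map (hX.meas n).aemeasurable hg.aestronglyMeasurable]
  · exact (hmeas.measurable.comp (hX.measurable_filtration m)).aestronglyMeasurable

lemma IsMarkovChain.measurePreserving {π : Measure X} (hX : IsMarkovChain P Xs π Q)
    (hπ : Q.Invariant π) (n : ℕ) : MeasurePreserving (Xs n) P π := by
  refine ⟨hX.meas n, ?_⟩
  have h := hX.map_restrict_add (n := 0) MeasurableSet.univ n
  rwa [Measure.restrict_univ, hX.init, zero_add, (invariant_kIter hπ n).def] at h

end MarkovProperty

section CenteredProducts

variable {Ω : Type*} [MeasurableSpace Ω] {P : Measure Ω} [IsFiniteMeasure P]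

lemma memLp_Zseq_ofFn {k : ℕ} {W : Fin k → Ω → ℝ} {p : Fin k → ℝ≥0∞}
    (hW : ∀ i, MemLp (W i) (p i) P) : MemLp (Zseq P (List.ofFn W)) (∑ i, (p i)⁻¹)⁻¹ P := by
  induction k with
  | zero => exact memLp_const 1
  | succ k ih =>
    rw [List.ofFn_succ, Fin.sum_univ_succ]
    have : ENNReal.HolderTriple (p 0) (∑ i : Fin k, (p i.succ)⁻¹)⁻¹
        ((p 0)⁻¹ + ∑ i : Fin k, (p i.succ)⁻¹)⁻¹ := ⟨by simp only [inv_inv]⟩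
    exact ((ih fun i => hW i.succ).mul' (hW 0)).sub (memLp_const _)

lemma integrable_Zseq_ofFn {k : ℕ} {W : Fin k → Ω → ℝ} {p : Fin k → ℝ≥0∞}
    (hW : ∀ i, MemLp (W i) (p i) P) (hp : ∑ i, (p i)⁻¹ ≤ 1) :
    Integrable (Zseq P (List.ofFn W)) P :=
  (memLp_Zseq_ofFn hW).integrable (ENNReal.one_le_inv.mpr hp)

lemma integrable_mul_Zseq_ofFn {k : ℕ} {W : Fin (k + 1) → Ω → ℝ} {p : Fin (k + 1) → ℝ≥0∞}
    (hW : ∀ i, MemLp (W i) (p i) P) (hp : ∑ i, (p i)⁻¹ ≤ 1) :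
    Integrable (fun ω => W 0 ω * Zseq P (List.ofFn (Fin.tail W)) ω) P := by
  have h := integrable_Zseq_ofFn hW hp
  rw [List.ofFn_succ] at h
  exact (integrable_add_const_iff (c := -∫ ω, W 0 ω * Zseq P (List.ofFn (Fin.tail W)) ω ∂P)).1 h

end CenteredProducts

section Regression

variable {X : Type*} [MeasurableSpace X]

/-- The regression function of `Z_2 = Zseq P [h 0 (X_{t 1}), …, h (k - 1) (X_{t k})]` on `X_{t 0}`
for a stationary chain: the conditional expectation of `Z_2` given the past up to time `t 0` is
`centeredRegression Q π t h (X_{t 0})`. The times are indexed from the conditioning time `t 0`, so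
that `h i` is evaluated at time `t i.succ`. -/
def centeredRegression (Q : Kernel X X) (π : Measure X) :
    {k : ℕ} → (Fin (k + 1) → ℕ) → (Fin k → X → ℝ) → X → ℝ
  | 0, _, _ => fun _ => 1
  | _ + 1, t, h => fun x =>
    ∫ y, h 0 y * centeredRegression Q π (Fin.tail t) (Fin.tail h) y ∂(kIter Q (t 1 - t 0) x) -
      ∫ y, h 0 y * centeredRegression Q π (Fin.tail t) (Fin.tail h) y ∂π

variable {Q : Kernel X X} {π : Measure X}

lemma measurable_centeredRegression {k : ℕ} (t : Fin (k + 1) → ℕ) {h : Fin k → X → ℝ}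
    (hh : ∀ i, Measurable (h i)) : Measurable (centeredRegression Q π t h) := by
  induction k with
  | zero => exact measurable_const
  | succ k ih =>
    have hmul := (hh 0).mul (ih (Fin.tail t) fun i => hh i.succ)
    exact hmul.stronglyMeasurable.integral_kernel.measurable.sub_const _

variable {Ω : Type*} [MeasurableSpace Ω] {P : Measure Ω} {Xs : ℕ → Ω → X}

lemma IsMarkovChain.condExp_mul {ξ : Measure X} (hX : IsMarkovChain P Xs ξ Q) {n : ℕ}
    {g φ : X → ℝ} {Z : Ω → ℝ} (hg : Measurable g) (hZ : Integrable Z P)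
    (hgZ : Integrable (fun ω => g (Xs n ω) * Z ω) P)
    (hφ : P[Z | hX.filtration n] =ᵐ[P] fun ω => φ (Xs n ω)) :
    P[fun ω => g (Xs n ω) * Z ω | hX.filtration n] =ᵐ[P] fun ω => g (Xs n ω) * φ (Xs n ω) := by
  have hgX : StronglyMeasurable[hX.filtration n] fun ω => g (Xs n ω) :=
    (hg.comp (hX.measurable_filtration n)).stronglyMeasurable
  exact (condExp_mul_of_stronglyMeasurable_left hgX hgZ hZ).trans
    (hφ.mono fun ω hω => congrArg (g (Xs n ω) * ·) hω)

variable [IsMarkovKernel Q] [IsFiniteMeasure P]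

lemma IsMarkovChain.condExp_of_condExp_eq {ξ : Measure X} (hX : IsMarkovChain P Xs ξ Q) {m n : ℕ}
    (hmn : m ≤ n) {Y : Ω → ℝ} {g : X → ℝ} (hg : Measurable g)
    (hY : P[Y | hX.filtration n] =ᵐ[P] fun ω => g (Xs n ω)) :
    P[Y | hX.filtration m] =ᵐ[P] fun ω => ∫ y, g y ∂(kIter Q (n - m) (Xs m ω)) :=
  (condExp_condExp_of_le (hX.filtration.mono hmn) (hX.filtration.le n)).symm.trans <|
    (condExp_congr_ae hY).trans <| hX.condExp_comp_of_le hmn hg (integrable_condExp.congr hY)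

lemma IsMarkovChain.integral_eq_of_condExp_eq (hX : IsMarkovChain P Xs π Q) (hπ : Q.Invariant π)
    {n : ℕ} {Y : Ω → ℝ} {g : X → ℝ} (hg : Measurable g)
    (hY : P[Y | hX.filtration n] =ᵐ[P] fun ω => g (Xs n ω)) : ∫ ω, Y ω ∂P = ∫ x, g x ∂π := by
  rw [← integral_condExp (hX.filtration.le n), integral_congr_ae hY,
    ← (hX.measurePreserving hπ n).map_eq,
    integral_map (hX.meas n).aemeasurable hg.aestronglyMeasurable]

theorem IsMarkovChain.condExp_Zseq (hX : IsMarkovChain P Xs π Q) (hπ : Q.Invariant π) {k : ℕ}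
    {t : Fin (k + 1) → ℕ} (ht : Monotone t) {h : Fin k → X → ℝ} (hh : ∀ i, Measurable (h i))
    {p : Fin k → ℝ≥0∞} (hhp : ∀ i, MemLp (h i) (p i) π) (hp : ∑ i, (p i)⁻¹ ≤ 1) :
    P[Zseq P (List.ofFn fun i ω => h i (Xs (t i.succ) ω)) | hX.filtration (t 0)] =ᵐ[P]
      fun ω => centeredRegression Q π t h (Xs (t 0) ω) := by
  induction k with
  | zero => exact (condExp_const (hX.filtration.le _) 1).eventuallyEq
  | succ k ih =>
    have hW (i : Fin (k + 1)) : MemLp (fun ω => h i (Xs (t i.succ) ω)) (p i) P :=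
      (hhp i).comp_measurePreserving (hX.measurePreserving hπ _)
    have hp_tail : ∑ i : Fin k, (p i.succ)⁻¹ ≤ 1 := by
      rw [Fin.sum_univ_succ] at hp
      exact le_add_self.trans hp
    set Y : Ω → ℝ := fun ω => h 0 (Xs (t 1) ω) *
      Zseq P (List.ofFn fun (i : Fin k) ω => h i.succ (Xs (t i.succ.succ) ω)) ω
    set g : X → ℝ := fun x => h 0 x * centeredRegression Q π (Fin.tail t) (Fin.tail h) x
    have hg : Measurable g :=
      (hh 0).mul (measurable_centeredRegression _ fun i => hh i.succ)
    have hY_int : Integrable Y P := integrable_mul_Zseq_ofFn hW hp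
    have hY : P[Y | hX.filtration (t 1)] =ᵐ[P] fun ω => g (Xs (t 1) ω) :=
      hX.condExp_mul (hh 0) (integrable_Zseq_ofFn (fun i => hW i.succ) hp_tail) hY_int <|
        ih (t := Fin.tail t) (fun i j hij => ht (Fin.succ_le_succ_iff.2 hij))
          (fun i => hh i.succ) (fun i => hhp i.succ) hp_tail
    have hZ : Zseq P (List.ofFn fun i ω => h i (Xs (t i.succ) ω)) = Y - fun _ => ∫ x, g x ∂π := by
      rw [List.ofFn_succ, ← hX.integral_eq_of_condExp_eq hπ hg hY]
      rfl
    rw [hZ]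
    filter_upwards [condExp_sub hY_int (integrable_const (∫ x, g x ∂π)) (hX.filtration (t 0)),
      hX.condExp_of_condExp_eq (ht (Fin.zero_le 1)) hg hY] with ω hω hYω
    rw [hω, Pi.sub_apply, hYω, condExp_const (hX.filtration.le _)]
    rfl

theorem IsMarkovChain.cmom_eq_integral (hX : IsMarkovChain P Xs π Q) (hπ : Q.Invariant π) {k : ℕ}
    {t : Fin (k + 1) → ℕ} (ht : Monotone t) {h : Fin (k + 1) → X → ℝ} (hh : ∀ i, Measurable (h i))
    {p : Fin (k + 1) → ℝ≥0∞} (hhp : ∀ i, MemLp (h i) (p i) π) (hp : ∑ i, (p i)⁻¹ ≤ 1) :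
    cmom P (List.ofFn fun i ω => h i (Xs (t i) ω)) =
      ∫ x, h 0 x * centeredRegression Q π t (Fin.tail h) x ∂π := by
  have hW (i : Fin (k + 1)) : MemLp (fun ω => h i (Xs (t i) ω)) (p i) P :=
    (hhp i).comp_measurePreserving (hX.measurePreserving hπ _)
  have hp_tail : ∑ i : Fin k, (p i.succ)⁻¹ ≤ 1 := by
    rw [Fin.sum_univ_succ] at hp
    exact le_add_self.trans hp
  rw [List.ofFn_succ]
  exact hX.integral_eq_of_condExp_eq hπ
    ((hh 0).mul (measurable_centeredRegression t fun i => hh i.succ))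
    (hX.condExp_mul (hh 0) (integrable_Zseq_ofFn (fun i => hW i.succ) hp_tail)
      (integrable_mul_Zseq_ofFn hW hp)
      (hX.condExp_Zseq hπ ht (fun i => hh i.succ) (fun i => hhp i.succ) hp_tail))

end Regression

section CenteredMomentBound

lemma sum_filter_succ_le {k : ℕ} (a : Fin (k + 1) → ℝ) (i : Fin k) :
    ∑ j with i.succ ≤ j, a j = ∑ j with i ≤ j, a j.succ := by
  simp [Finset.sum_filter, Fin.sum_univ_succ]

lemma prod_two_mul_mul_rpow_le {ι : Type*} (s : Finset ι) {N a α : ι → ℝ} {g : ι → ℕ} {K ρ : ℝ}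
    (hN : ∀ i ∈ s, 0 ≤ N i) (hK : 0 < K) (hρ0 : 0 < ρ) (hρ1 : ρ ≤ 1) (ha : ∀ i ∈ s, a i ≤ α i) :
    ∏ i ∈ s, 2 * N i * (K * ρ ^ g i) ^ α i ≤
      2 ^ #s * K ^ (∑ i ∈ s, α i) * ρ ^ (∑ i ∈ s, g i * a i) * ∏ i ∈ s, N i := by
  have hfactor : ∀ i ∈ s, (K * ρ ^ g i) ^ α i ≤ K ^ α i * ρ ^ (g i * a i) := fun i hi => by
    rw [Real.mul_rpow hK.le (by positivity), ← Real.rpow_natCast_mul hρ0.le]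
    have := ha i hi
    exact mul_le_mul_of_nonneg_left
      (Real.rpow_le_rpow_of_exponent_ge hρ0 hρ1 (by gcongr)) (by positivity)
  calc ∏ i ∈ s, 2 * N i * (K * ρ ^ g i) ^ α i
      ≤ ∏ i ∈ s, 2 * N i * (K ^ α i * ρ ^ (g i * a i)) :=
        Finset.prod_le_prod (fun i hi => by have := hN i hi; positivity) fun i hi =>
          mul_le_mul_of_nonneg_left (hfactor i hi) (mul_nonneg zero_le_two (hN i hi))
    _ = 2 ^ #s * K ^ (∑ i ∈ s, α i) * ρ ^ (∑ i ∈ s, g i * a i) * ∏ i ∈ s, N i := by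
        simp only [Finset.prod_mul_distrib, Finset.prod_const, Real.rpow_sum_of_pos hK,
          Real.rpow_sum_of_pos hρ0]
        ring

variable {X : Type*} {V : X → ℝ} {K ρ : ℝ} {k : ℕ}

/-- The constant bounding `|centeredRegression Q π t h|` in terms of `V ^ ∑ i, a i`: conditioning
across the gap before time `t i.succ` contributes the `i`-th factor, whose exponent is the total
weight of the functions evaluated from that time on. -/
def regressionBound (V : X → ℝ) (K ρ : ℝ) {k : ℕ} (t : Fin (k + 1) → ℕ) (a : Fin k → ℝ)
    (h : Fin k → X → ℝ) : ℝ :=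
  ∏ i : Fin k, 2 * vnorm (fun x => V x ^ a i) (h i) *
    (K * ρ ^ (t i.succ - t i.castSucc)) ^ (∑ j with i ≤ j, a j)

lemma regressionBound_succ (t : Fin (k + 2) → ℕ) (a : Fin (k + 1) → ℝ)
    (h : Fin (k + 1) → X → ℝ) : regressionBound V K ρ t a h =
      2 * vnorm (fun x => V x ^ a 0) (h 0) * (K * ρ ^ (t 1 - t 0)) ^ (∑ i, a i) *
        regressionBound V K ρ (Fin.tail t) (Fin.tail a) (Fin.tail h) := by
  simp only [regressionBound, Fin.prod_univ_succ, sum_filter_succ_le, Fin.zero_le,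
    Finset.filter_true]
  rfl

lemma regressionBound_nonneg (hV0 : ∀ x, 0 ≤ V x) (hK : 0 ≤ K) (hρ : 0 ≤ ρ)
    (t : Fin (k + 1) → ℕ) (a : Fin k → ℝ) (h : Fin k → X → ℝ) :
    0 ≤ regressionBound V K ρ t a h :=
  Finset.prod_nonneg fun i _ => by
    have := vnorm_nonneg (g := h i) fun x => Real.rpow_nonneg (hV0 x) (a i)
    positivity

lemma regressionBound_le (hV0 : ∀ x, 0 ≤ V x) (hK : 0 < K) (hρ0 : 0 < ρ) (hρ1 : ρ ≤ 1)
    (t : Fin (k + 1) → ℕ) {a : Fin k → ℝ} (ha0 : ∀ i, 0 ≤ a i) (h : Fin k → X → ℝ) :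
    regressionBound V K ρ t a h ≤
      2 ^ k * K ^ (∑ i, ∑ j with i ≤ j, a j) *
        ρ ^ (∑ i, ((t i.succ - t i.castSucc : ℕ) : ℝ) * a i) *
        ∏ i, vnorm (fun x => V x ^ a i) (h i) := by
  have hle := prod_two_mul_mul_rpow_le Finset.univ (N := fun i => vnorm (fun x => V x ^ a i) (h i))
    (g := fun i => t i.succ - t i.castSucc)
    (fun i _ => vnorm_nonneg fun x => Real.rpow_nonneg (hV0 x) (a i)) hK hρ0 hρ1 fun i _ =>
      Finset.single_le_sum (fun j _ => ha0 j) (Finset.mem_filter.2 ⟨Finset.mem_univ i, le_refl i⟩)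
  rwa [Finset.card_univ, Fintype.card_fin] at hle

variable [MeasurableSpace X] {Q : Kernel X X} [IsMarkovKernel Q] {π : Measure X}
  [IsProbabilityMeasure π] {c : ℝ}

theorem GeometricallyErgodic.ae_abs_centeredRegression_le (hQ : GeometricallyErgodic Q π V c ρ)
    (hπ : Q.Invariant π) (hV1 : ∀ x, 1 ≤ V x) (hVπ : Integrable V π) (hc : 0 < c) (hρ : 0 < ρ)
    (t : Fin (k + 1) → ℕ) {a : Fin k → ℝ} (ha0 : ∀ i, 0 ≤ a i) (ha1 : ∑ i, a i ≤ 1)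
    {h : Fin k → X → ℝ} (hh : ∀ i, MemL (fun x => V x ^ a i) (h i)) :
    ∀ᵐ x ∂π, |centeredRegression Q π t h x| ≤
      regressionBound V (c * ∫ y, V y ∂π) ρ t a h * V x ^ (∑ i, a i) := by
  have hV0 : ∀ x, 0 < V x := fun x => zero_lt_one.trans_le (hV1 x)
  have hK : 0 < c * ∫ y, V y ∂π :=
    mul_pos hc (zero_lt_one.trans_le (one_le_integral_of_one_le hV1 hVπ))
  induction k with
  | zero => exact ae_of_all _ fun x => by simp [centeredRegression, regressionBound]
  | succ k ih =>
    have ha1_tail : ∑ i : Fin k, a i.succ ≤ 1 := by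
      rw [Fin.sum_univ_succ] at ha1
      linarith [ha0 0]
    have htail := ih (Fin.tail t) (fun i => ha0 i.succ) ha1_tail fun i => hh i.succ
    set B := regressionBound V (c * ∫ y, V y ∂π) ρ (Fin.tail t) (Fin.tail a) (Fin.tail h)
    have hB : 0 ≤ B := regressionBound_nonneg (fun x => (hV0 x).le) hK.le hρ.le _ _ _
    have hprod : ∀ᵐ x ∂π, |h 0 x * centeredRegression Q π (Fin.tail t) (Fin.tail h) x| ≤
        vnorm (fun x => V x ^ a 0) (h 0) * B * V x ^ (∑ i, a i) := by
      rw [Fin.sum_univ_succ]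
      exact (hh 0).ae_abs_mul_le hV0 htail
    have hmeas : Measurable fun x =>
        h 0 x * centeredRegression Q π (Fin.tail t) (Fin.tail h) x :=
      (hh 0).meas.mul (measurable_centeredRegression _ fun i => (hh i.succ).meas)
    have hC : 0 ≤ vnorm (fun x => V x ^ a 0) (h 0) * B :=
      mul_nonneg (vnorm_nonneg fun x => Real.rpow_nonneg (hV0 x).le _) hB
    filter_upwards [hQ.ae_abs_integral_sub_le hπ hV1 hVπ hc hρ (Finset.sum_nonneg fun i _ => ha0 i)
      ha1 hC hmeas hprod (t 1 - t 0)] with x hx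
    refine hx.trans_eq ?_
    rw [regressionBound_succ]
    ring

theorem GeometricallyErgodic.abs_integral_mul_centeredRegression_le
    (hQ : GeometricallyErgodic Q π V c ρ) (hπ : Q.Invariant π) (hV1 : ∀ x, 1 ≤ V x)
    (hVπ : Integrable V π) (hc : 1 ≤ c) (hρ : 0 < ρ) (t : Fin (k + 1) → ℕ)
    {a : Fin (k + 1) → ℝ} (ha0 : ∀ i, 0 ≤ a i) (ha1 : ∑ i, a i ≤ 1)
    {h : Fin (k + 1) → X → ℝ} (hh : ∀ i, MemL (fun x => V x ^ a i) (h i)) :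
    |∫ x, h 0 x * centeredRegression Q π t (Fin.tail h) x ∂π| ≤
      vnorm (fun x => V x ^ a 0) (h 0) *
        regressionBound V (c * ∫ y, V y ∂π) ρ t (Fin.tail a) (Fin.tail h) *
        (c * ∫ y, V y ∂π) ^ (∑ i, a i) := by
  have hV0 : ∀ x, 0 < V x := fun x => zero_lt_one.trans_le (hV1 x)
  have hπV : 1 ≤ ∫ y, V y ∂π := one_le_integral_of_one_le hV1 hVπ
  have hK : 0 < c * ∫ y, V y ∂π := by positivity
  have ha1_tail : ∑ i : Fin k, a i.succ ≤ 1 := by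
    rw [Fin.sum_univ_succ] at ha1
    linarith [ha0 0]
  have hsum0 : 0 ≤ ∑ i, a i := Finset.sum_nonneg fun i _ => ha0 i
  have hN : 0 ≤ vnorm (fun x => V x ^ a 0) (h 0) := vnorm_nonneg fun x =>
    Real.rpow_nonneg (hV0 x).le _
  set B := regressionBound V (c * ∫ y, V y ∂π) ρ t (Fin.tail a) (Fin.tail h)
  have hB : 0 ≤ B := regressionBound_nonneg (fun x => (hV0 x).le) hK.le hρ.le _ _ _
  have hbound : ∀ᵐ x ∂π, ‖h 0 x * centeredRegression Q π t (Fin.tail h) x‖ ≤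
      vnorm (fun x => V x ^ a 0) (h 0) * B * V x ^ (∑ i, a i) := by
    rw [Fin.sum_univ_succ]
    exact (hh 0).ae_abs_mul_le hV0 <| hQ.ae_abs_centeredRegression_le hπ hV1 hVπ
      (zero_lt_one.trans_le hc) hρ t (fun i => ha0 i.succ) ha1_tail fun i => hh i.succ
  calc |∫ x, h 0 x * centeredRegression Q π t (Fin.tail h) x ∂π|
      ≤ ∫ x, vnorm (fun x => V x ^ a 0) (h 0) * B * V x ^ (∑ i, a i) ∂π :=
        norm_integral_le_of_norm_le
          ((integrable_rpow (fun x => (hV0 x).le) hVπ hsum0 ha1).const_mul _) hbound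
    _ = vnorm (fun x => V x ^ a 0) (h 0) * B * ∫ x, V x ^ (∑ i, a i) ∂π := integral_const_mul _ _
    _ ≤ vnorm (fun x => V x ^ a 0) (h 0) * B * (1 * (c * ∫ y, V y ∂π) ^ (∑ i, a i)) := by
        gcongr
        refine integral_rpow_le_mul_rpow (fun x => (hV0 x).le) hVπ hsum0 ha1 hK
          probReal_univ.le ?_
        rw [one_mul]
        exact le_mul_of_one_le_left (zero_le_one.trans hπV) hc
    _ = vnorm (fun x => V x ^ a 0) (h 0) * B * (c * ∫ y, V y ∂π) ^ (∑ i, a i) := by rw [one_mul]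

theorem centered_moments_bound_general {Ω : Type*} [MeasurableSpace Ω] {P : Measure Ω}
    [IsProbabilityMeasure P] {Xs : ℕ → Ω → X} (hX : IsMarkovChain P Xs π Q)
    (hπ : Q.Invariant π) (hQ : GeometricallyErgodic Q π V c ρ) (hV1 : ∀ x, 1 ≤ V x)
    (hVπ : Integrable V π) (hc : 1 ≤ c) (hρ0 : 0 < ρ) (hρ1 : ρ ≤ 1)
    {t : Fin (k + 1) → ℕ} (ht : Monotone t) {a : Fin (k + 1) → ℝ} (ha0 : ∀ i, 0 ≤ a i)
    (ha1 : ∑ i, a i ≤ 1) {h : Fin (k + 1) → X → ℝ}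
    (hh : ∀ i, MemL (fun x => V x ^ a i) (h i)) :
    |cmom P (List.ofFn fun i ω => h i (Xs (t i) ω))| ≤
      2 ^ k * (c * ∫ x, V x ∂π) ^ (∑ i, ∑ j with i ≤ j, a j) *
        ρ ^ (∑ i : Fin k, ((t i.succ - t i.castSucc : ℕ) : ℝ) * a i.succ) *
        ∏ i, vnorm (fun x => V x ^ a i) (h i) := by
  have hV0 : ∀ x, 0 < V x := fun x => zero_lt_one.trans_le (hV1 x)
  have hπV : 1 ≤ ∫ y, V y ∂π := one_le_integral_of_one_le hV1 hVπ
  have hK : 0 < c * ∫ y, V y ∂π := by positivity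
  have hHolder : ∑ i, (ENNReal.ofReal (a i))⁻¹⁻¹ ≤ 1 := by
    simp only [inv_inv]
    rw [← ENNReal.ofReal_sum_of_nonneg fun i _ => ha0 i]
    exact ENNReal.ofReal_le_one.2 ha1
  rw [hX.cmom_eq_integral hπ ht (fun i => (hh i).meas)
    (fun i => (hh i).memLp_rpow_inv hV0 hVπ (ha0 i)) hHolder]
  calc |∫ x, h 0 x * centeredRegression Q π t (Fin.tail h) x ∂π|
      ≤ vnorm (fun x => V x ^ a 0) (h 0) *
          regressionBound V (c * ∫ y, V y ∂π) ρ t (Fin.tail a) (Fin.tail h) *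
          (c * ∫ y, V y ∂π) ^ (∑ i, a i) :=
        hQ.abs_integral_mul_centeredRegression_le hπ hV1 hVπ hc hρ0 t ha0 ha1 hh
    _ ≤ vnorm (fun x => V x ^ a 0) (h 0) *
          (2 ^ k * (c * ∫ y, V y ∂π) ^ (∑ i : Fin k, ∑ j with i ≤ j, a j.succ) *
            ρ ^ (∑ i : Fin k, ((t i.succ - t i.castSucc : ℕ) : ℝ) * a i.succ) *
            ∏ i : Fin k, vnorm (fun x => V x ^ a i.succ) (h i.succ)) *
          (c * ∫ y, V y ∂π) ^ (∑ i, a i) := by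
        gcongr
        · exact vnorm_nonneg fun x => Real.rpow_nonneg (hV0 x).le _
        · exact regressionBound_le (fun x => (hV0 x).le) hK hρ0 hρ1 t (fun i => ha0 i.succ) _
    _ = 2 ^ k * (c * ∫ x, V x ∂π) ^ (∑ i, ∑ j with i ≤ j, a j) *
          ρ ^ (∑ i : Fin k, ((t i.succ - t i.castSucc : ℕ) : ℝ) * a i.succ) *
          ∏ i, vnorm (fun x => V x ^ a i) (h i) := by
        simp only [Fin.prod_univ_succ, Fin.sum_univ_succ (n := k) (fun i => ∑ j with i ≤ j, a j),
          sum_filter_succ_le, Fin.zero_le, Finset.filter_true, Real.rpow_add hK]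
        ring

end CenteredMomentBound

/-- Centered-moment bound (Lemma 4): for `h_ℓ ∈ L_{V^{p_ℓ/s}}`,
`|Ē_π[h_1(X_{t_1}),…,h_k(X_{t_k})]| ≤ 2^{k-1} (cπ(V))^{Σ_ℓ Σ_{j≥ℓ} p_j/s}
  ρ^{Σ_{j=2}^k (t_j - t_{j-1}) p_j / s} Π_ℓ ‖h_ℓ‖_{V^{p_ℓ/s}}`. -/
theorem centered_moments_bound
    {X : Type*} [MeasurableSpace X]
    (Q : ProbabilityTheory.Kernel X X) [ProbabilityTheory.IsMarkovKernel Q]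
    (V : X → ℝ) (lam b : ℝ) (m : ℕ) (eps d c ρ : ℝ) (piQ : Measure X)
    [IsProbabilityMeasure piQ]
    -- Assumption A1
    (hV : Measurable V) (hVe : ∀ x, Real.exp 1 ≤ V x)
    (hlam0 : 0 < lam) (hlam1 : lam < 1) (hb : 0 ≤ b)
    (hdrift : ∀ x, ∫ y, V y ∂(Q x) ≤ lam * V x + b)
    -- Assumption A2
    (hm : 1 ≤ m) (heps0 : 0 < eps) (heps1 : eps < 1) (hd : 0 ≤ d)
    (hsmallcond : lam + 2 * b / (1 + d) < 1)
    (hsmall : ∃ ν : Measure X, IsProbabilityMeasure ν ∧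
      ∀ x, V x ≤ d → ∀ A : Set X, MeasurableSet A →
        ENNReal.ofReal eps * ν A ≤ (kIter Q m) x A)
    -- piQ is the unique invariant probability measure, with piQ(V) < ∞
    (hinv : piQ.bind (fun x => Q x) = piQ)
    (huniq : ∀ π' : Measure X, IsProbabilityMeasure π' →
      π'.bind (fun x => Q x) = π' → π' = piQ)
    (hpiV : Integrable V piQ)
    -- geometric ergodicity constants c ≥ 1, ρ ∈ (0,1)
    (hc : 1 ≤ c) (hρ0 : 0 < ρ) (hρ1 : ρ < 1)
    (herg : ∀ ξ : Measure X, IsProbabilityMeasure ξ → Integrable V ξ → ∀ k : ℕ,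
      wTV V (ξ.bind (fun x => (kIter Q k) x)) piQ ≤
        c * ((∫ x, V x ∂ξ) + ∫ x, V x ∂piQ) * ρ ^ k)
    -- the stationary canonical chain
    {Ω : Type*} [MeasurableSpace Ω] (P : Measure Ω) [IsProbabilityMeasure P]
    (Xs : ℕ → Ω → X) (hchain : IsMarkovChain P Xs piQ Q)
    -- indices, times, exponents and functions
    (s : ℕ) (hs : 1 ≤ s) (k : ℕ) (hk1 : 1 ≤ k) (hks : k ≤ s)
    (n : ℕ) (hn : 1 ≤ n) (t : Fin k → ℕ) (hmono : Monotone t)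
    (htn : ∀ i, t i ≤ n - 1)
    (p : Fin k → ℕ) (hp1 : ∀ i, 1 ≤ p i) (hps : ∑ i, p i ≤ s)
    (h : Fin k → X → ℝ)
    (hmem : ∀ i, MemL (fun x => V x ^ ((p i : ℝ) / (s : ℝ))) (h i)) :
    |cmom P (List.ofFn fun i : Fin k => fun ω => h i (Xs (t i) ω))| ≤
      2 ^ (k - 1) *
        (c * ∫ x, V x ∂piQ) ^
          (∑ ℓ : Fin k, ∑ j ∈ Finset.univ.filter (fun j : Fin k => ℓ ≤ j),
            (p j : ℝ) / (s : ℝ)) *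
        ρ ^ (∑ i : Fin (k - 1),
          ((t ⟨(i : ℕ) + 1, by have := i.isLt; omega⟩
              - t ⟨(i : ℕ), by have := i.isLt; omega⟩ : ℕ) : ℝ) *
            (p ⟨(i : ℕ) + 1, by have := i.isLt; omega⟩ : ℝ) / (s : ℝ)) *
        ∏ i : Fin k, vnorm (fun x => V x ^ ((p i : ℝ) / (s : ℝ))) (h i) := by
  obtain ⟨k, rfl⟩ := Nat.exists_eq_add_of_le' hk1
  have hs0 : (0 : ℝ) < s := Nat.cast_pos.2 hs
  have hV1 : ∀ x, 1 ≤ V x := fun x => (Real.one_le_exp zero_le_one).trans (hVe x)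
  have hsum : ∑ i, (p i : ℝ) / s ≤ 1 := by
    rw [← Finset.sum_div, div_le_one hs0]
    exact_mod_cast hps
  have hbound := centered_moments_bound_general hchain hinv
    (geometricallyErgodic_of_forall_measure hV herg) hV1 hpiV hc hρ0 hρ1.le hmono
    (fun i => by positivity) hsum hmem
  simp only [← mul_div_assoc] at hbound
  exact hbound
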